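/- For λ = 0 and for λ = 1, the 7-dimensional nilpotent Lie algebra g_{3.1(i_λ)} is not an Einstein nilradical. -/

import Mathlib

open Matrix BigOperators Polynomial

noncomputable section

abbrev Law (n : ℕ) := (Fin n → ℝ) → (Fin n → ℝ) → (Fin n → ℝ)

/-- `i`-th canonical basis vector of `ℝ^n`. -/
def bVec {n : ℕ} (i : Fin n) : Fin n → ℝ := Pi.single i 1

def IsBilin {n : ℕ} (μ : Law n) : Prop :=
  (∀ X, IsLinearMap ℝ (μ X)) ∧ (∀ Y, IsLinearMap ℝ (fun X => μ X Y))

def IsSkew {n : ℕ} (μ : Law n) : Prop := ∀ X Y, μ X Y = - μ Y X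

def IsJacobi {n : ℕ} (μ : Law n) : Prop :=
  ∀ X Y Z, μ (μ X Y) Z + μ (μ Y Z) X + μ (μ Z X) Y = 0

def IsLieLaw {n : ℕ} (μ : Law n) : Prop := IsBilin μ ∧ IsSkew μ ∧ IsJacobi μ

/-- lower central series of the law `μ`. -/
def lcs {n : ℕ} (μ : Law n) : ℕ → Submodule ℝ (Fin n → ℝ)
  | 0 => ⊤
  | k + 1 => Submodule.span ℝ {z | ∃ x y, y ∈ lcs μ k ∧ z = μ x y}

def IsNilpotentLaw {n : ℕ} (μ : Law n) : Prop :=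
  IsLieLaw μ ∧ ∃ k, lcs μ k = ⊥

/-- the action of `GL_n(ℝ)` on laws: `(g·μ)(X,Y) = g μ(g⁻¹X, g⁻¹Y)`. -/
def act {n : ℕ} (g : GL (Fin n) ℝ) (μ : Law n) : Law n :=
  fun X Y =>
    (g : Matrix (Fin n) (Fin n) ℝ).mulVec
      (μ (((g⁻¹ : GL (Fin n) ℝ) : Matrix (Fin n) (Fin n) ℝ).mulVec X)
         (((g⁻¹ : GL (Fin n) ℝ) : Matrix (Fin n) (Fin n) ℝ).mulVec Y))

def IsDerivation {n : ℕ} (μ : Law n) (ψ : Matrix (Fin n) (Fin n) ℝ) : Prop :=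
  ∀ X Y, ψ.mulVec (μ X Y) = μ (ψ.mulVec X) Y + μ X (ψ.mulVec Y)

/-- the unnormalized moment map `m(μ) = 4 Ric_μ`, as a matrix in the canonical basis. -/
def momentMap {n : ℕ} (μ : Law n) : Matrix (Fin n) (Fin n) ℝ :=
  Matrix.of fun k l =>
    4 * (-(1/2) * ∑ i, ∑ j, μ (bVec k) (bVec i) j * μ (bVec l) (bVec i) j
      + (1/4) * ∑ i, ∑ j, μ (bVec i) (bVec j) k * μ (bVec i) (bVec j) l)

def IsEinsteinNilradical {n : ℕ} (μ : Law n) : Prop :=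
  ∃ g : GL (Fin n) ℝ, ∃ c : ℝ, ∃ φ : Matrix (Fin n) (Fin n) ℝ,
    c < 0 ∧ φ.IsSymm ∧ IsDerivation (act g μ) φ ∧
    momentMap (act g μ) = c • (1 : Matrix (Fin n) (Fin n) ℝ) + φ

/-- build a (bilinear) law from a table `c` of structure constants on the
canonical basis, antisymmetrized: `[e_i, e_j] = c i j - c j i`. -/
def mkLaw {n : ℕ} (c : Fin n → Fin n → Fin n → ℝ) : Law n :=
  fun X Y k => ∑ i, ∑ j, X i * Y j * (c i j k - c j i k)

/-- structure constants of `g_{3.1(i_λ)}`. -/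
def c31 (lam : ℝ) : Fin 7 → Fin 7 → Fin 7 → ℝ := fun i j =>
  if i = 0 ∧ j = 1 then Pi.single 3 1
  else if i = 0 ∧ j = 2 then Pi.single 4 1
  else if i = 0 ∧ j = 5 then Pi.single 6 1
  else if i = 1 ∧ j = 2 then Pi.single 5 1
  else if i = 1 ∧ j = 4 then Pi.single 6 lam
  else if i = 2 ∧ j = 3 then Pi.single 6 (lam - 1)
  else 0

/-- the Lie algebra law of `g_{3.1(i_λ)}`. -/
def law31 (lam : ℝ) : Law 7 := mkLaw (c31 lam)

/-! A pre-Einstein derivation is a derivation `ψ` with `tr (ψ D) = tr D` for every derivation `D`.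
Since the moment map is orthogonal to all derivations, an equation `m(ν) = c I + φ` with `c < 0`
makes `-c⁻¹ φ` pre-Einstein. On a central vector `v` one has `⟨m(ν) v, v⟩ = ∑ ‖(ad e_i)ᵀ v‖²`, which
is positive if `v ≠ 0` lies in the derived algebra; hence every eigenvalue of this derivation on the
intersection of the centre and the derived algebra exceeds `1`.

For `law31 lam` the diagonal derivations force a pre-Einstein derivation to have diagonal
`(1/2, 1/2, 1/2, 1, 1, 1, 3/2)`. For `lam = 0` and `lam = 1` the centre is larger than the line of
`e_7`: it also contains `e_5`, respectively `e_4` (`e_i` is `bVec (i - 1)` below), on which the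
diagonal entry is `1`. This yields a central eigenvector in the derived algebra with eigenvalue
exactly `1`. -/

variable {n : ℕ} {μ : Law n} {ψ φ : Matrix (Fin n) (Fin n) ℝ}

/-- The elements of the centre of the algebra with law `μ`; for skew laws the one-sided condition
suffices. -/
def IsCentral (μ : Law n) (v : Fin n → ℝ) : Prop := ∀ Y, μ v Y = 0

/-- The matrix of `ad X = μ(X, ·)` in the canonical basis, for bilinear `μ`. -/
def adMatrix (μ : Law n) (X : Fin n → ℝ) : Matrix (Fin n) (Fin n) ℝ :=
  of fun k j => μ X (bVec j) k

/-- `ψ` is a pre-Einstein derivation: it represents the trace functional on derivations through the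
trace form. Semisimplicity of `ψ`, usually part of the definition, is not imposed. -/
def IsPreEinstein (μ : Law n) (ψ : Matrix (Fin n) (Fin n) ℝ) : Prop :=
  IsDerivation μ ψ ∧ ∀ D, IsDerivation μ D → (ψ * D).trace = D.trace

theorem mulVec_bVec (ψ : Matrix (Fin n) (Fin n) ℝ) (i : Fin n) : ψ *ᵥ bVec i = ψ.col i :=
  mulVec_single_one ψ i

theorem sum_smul_bVec (X : Fin n → ℝ) : ∑ i, X i • bVec i = X := by
  funext k
  simp [bVec, Finset.sum_apply, Pi.single_apply]

namespace IsBilin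

theorem sum_smul_apply_left (hb : IsBilin μ) (X Y : Fin n → ℝ) :
    ∑ i, X i • μ (bVec i) Y = μ X Y := by
  have h := map_sum ((hb.2 Y).mk' _) (fun i => X i • bVec i) Finset.univ
  rw [sum_smul_bVec] at h
  simpa [(hb.2 Y).map_smul] using h.symm

theorem sum_smul_apply_right (hb : IsBilin μ) (X Y : Fin n → ℝ) :
    ∑ i, Y i • μ X (bVec i) = μ X Y := by
  have h := map_sum ((hb.1 X).mk' _) (fun i => Y i • bVec i) Finset.univ
  rw [sum_smul_bVec] at h
  simpa [(hb.1 X).map_smul] using h.symm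

theorem adMatrix_mulVec (hb : IsBilin μ) (X Y : Fin n → ℝ) : adMatrix μ X *ᵥ Y = μ X Y := by
  rw [← hb.sum_smul_apply_right X Y]
  funext k
  simp [adMatrix, mulVec, dotProduct, mul_comm]

theorem sum_smul_adMatrix (hb : IsBilin μ) (X : Fin n → ℝ) :
    ∑ i, X i • adMatrix μ (bVec i) = adMatrix μ X := by
  ext k j
  rw [adMatrix, of_apply, ← hb.sum_smul_apply_left]
  simp [adMatrix, Matrix.sum_apply]

end IsBilin

theorem IsCentral.adMatrix_mulVec (hb : IsBilin μ) (hs : IsSkew μ) {v : Fin n → ℝ}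
    (hv : IsCentral μ v) (X : Fin n → ℝ) : adMatrix μ X *ᵥ v = 0 := by
  rw [hb.adMatrix_mulVec, hs, hv, neg_zero]

namespace IsDerivation

theorem smul (hb : IsBilin μ) (a : ℝ) (h : IsDerivation μ ψ) : IsDerivation μ (a • ψ) := by
  intro X Y
  simp only [smul_mulVec, (hb.1 _).map_smul, (hb.2 _).map_smul, h X Y, smul_add]

theorem isCentral_mulVec (h : IsDerivation μ ψ) {v : Fin n → ℝ} (hv : IsCentral μ v) :
    IsCentral μ (ψ *ᵥ v) := fun Y => by
  simpa [hv _] using (h v Y).symm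

theorem col_eq (h : IsDerivation μ ψ) {i j k : Fin n} (hijk : μ (bVec i) (bVec j) = bVec k) :
    ψ.col k = μ (ψ.col i) (bVec j) + μ (bVec i) (ψ.col j) := by
  simpa only [hijk, mulVec_bVec] using h (bVec i) (bVec j)

theorem adMatrix_mulVec (hb : IsBilin μ) (h : IsDerivation μ ψ) (X : Fin n → ℝ) :
    adMatrix μ (ψ *ᵥ X) = ψ * adMatrix μ X - adMatrix μ X * ψ := by
  refine ext_of_mulVec_single fun i => ?_
  simp only [sub_mulVec, ← mulVec_mulVec, hb.adMatrix_mulVec, h X, add_sub_cancel_right]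

end IsDerivation

section MomentMap

theorem sum_transpose_adMatrix_mul_apply (hs : IsSkew μ) (k l : Fin n) :
    (∑ i, (adMatrix μ (bVec i))ᵀ * adMatrix μ (bVec i)) k l
      = ((adMatrix μ (bVec k))ᵀ * adMatrix μ (bVec l)).trace := by
  simp only [Matrix.sum_apply, trace, diag_apply, mul_apply, transpose_apply, adMatrix, of_apply]
  refine Finset.sum_congr rfl fun i _ => Finset.sum_congr rfl fun j _ => ?_
  rw [hs (bVec i), hs (bVec i), Pi.neg_apply, Pi.neg_apply, neg_mul_neg]

theorem momentMap_eq_sum_adMatrix (hs : IsSkew μ) :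
    momentMap μ = ∑ i, adMatrix μ (bVec i) * (adMatrix μ (bVec i))ᵀ
      - (2 : ℝ) • ∑ i, (adMatrix μ (bVec i))ᵀ * adMatrix μ (bVec i) := by
  ext k l
  rw [Matrix.sub_apply, Matrix.smul_apply, sum_transpose_adMatrix_mul_apply hs]
  simp only [momentMap, of_apply, Matrix.sum_apply, trace, diag_apply, mul_apply, transpose_apply,
    adMatrix, smul_eq_mul]
  ring

theorem sum_trace_transpose_adMatrix_mul (hb : IsBilin μ) (hs : IsSkew μ)
    (D : Matrix (Fin n) (Fin n) ℝ) :
    ∑ i, ((adMatrix μ (bVec i))ᵀ * adMatrix μ (D *ᵥ bVec i)).trace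
      = ((∑ i, (adMatrix μ (bVec i))ᵀ * adMatrix μ (bVec i)) * D).trace := by
  rw [trace]
  refine Finset.sum_congr rfl fun i _ => ?_
  rw [diag_apply, mul_apply, ← hb.sum_smul_adMatrix (D *ᵥ bVec i), Matrix.mul_sum, trace_sum]
  refine Finset.sum_congr rfl fun l _ => ?_
  rw [sum_transpose_adMatrix_mul_apply hs, mul_smul_comm, trace_smul, mulVec_bVec, col_apply,
    smul_eq_mul, mul_comm]

theorem trace_momentMap_mul (hb : IsBilin μ) (hs : IsSkew μ) {D : Matrix (Fin n) (Fin n) ℝ}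
    (hD : IsDerivation μ D) : (momentMap μ * D).trace = 0 := by
  have hcycle : ∀ A : Matrix (Fin n) (Fin n) ℝ, (Aᵀ * (D * A)).trace = (A * Aᵀ * D).trace :=
    fun A => by rw [← mul_assoc, trace_mul_comm, ← mul_assoc]
  have h := sum_trace_transpose_adMatrix_mul hb hs D
  simp only [hD.adMatrix_mulVec hb, mul_sub, trace_sub, hcycle, Finset.sum_sub_distrib] at h
  simp only [← mul_assoc, ← trace_sum, ← Finset.sum_mul] at h
  rw [momentMap_eq_sum_adMatrix hs, sub_mul, trace_sub, smul_mul_assoc, trace_smul, smul_eq_mul]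
  linarith

theorem dotProduct_momentMap_mulVec_of_isCentral (hb : IsBilin μ) (hs : IsSkew μ)
    {v : Fin n → ℝ} (hv : IsCentral μ v) :
    v ⬝ᵥ momentMap μ *ᵥ v
      = ∑ i, (adMatrix μ (bVec i))ᵀ *ᵥ v ⬝ᵥ (adMatrix μ (bVec i))ᵀ *ᵥ v := by
  simp only [momentMap_eq_sum_adMatrix hs, sub_mulVec, smul_mulVec, sum_mulVec, ← mulVec_mulVec,
    hv.adMatrix_mulVec hb hs, mulVec_zero, Finset.sum_const_zero, smul_zero, sub_zero,
    dotProduct_sum]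
  refine Finset.sum_congr rfl fun i _ => ?_
  rw [dotProduct_mulVec, ← mulVec_transpose]

theorem dotProduct_momentMap_mulVec_pos (hb : IsBilin μ) (hs : IsSkew μ) {v : Fin n → ℝ}
    (hv : IsCentral μ v) (hv' : v ∈ lcs μ 1) (hv0 : v ≠ 0) : 0 < v ⬝ᵥ momentMap μ *ᵥ v := by
  have hnonneg : ∀ w : Fin n → ℝ, 0 ≤ w ⬝ᵥ w := fun w => dotProduct_self_star_nonneg w
  rw [dotProduct_momentMap_mulVec_of_isCentral hb hs hv]
  refine (Finset.sum_nonneg fun i _ => hnonneg _).lt_of_ne' fun hsum => hv0 ?_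
  have had : ∀ i, (adMatrix μ (bVec i))ᵀ *ᵥ v = 0 := fun i => dotProduct_self_eq_zero.1 <|
    (Finset.sum_eq_zero_iff_of_nonneg fun i _ => hnonneg _).1 hsum i (Finset.mem_univ i)
  have hbasis : ∀ i Y, v ⬝ᵥ μ (bVec i) Y = 0 := fun i Y => by
    rw [← hb.adMatrix_mulVec, dotProduct_mulVec, ← mulVec_transpose, had, zero_dotProduct]
  have hbracket : ∀ X Y, v ⬝ᵥ μ X Y = 0 := fun X Y => by
    simp [← hb.sum_smul_apply_left X Y, dotProduct_sum, hbasis]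
  suffices ∀ w ∈ lcs μ 1, v ⬝ᵥ w = 0 from dotProduct_self_eq_zero.1 (this v hv')
  intro w hw
  induction hw using Submodule.span_induction with
  | mem w hw => obtain ⟨X, Y, -, rfl⟩ := hw; exact hbracket X Y
  | zero => exact dotProduct_zero v
  | add w₁ w₂ _ _ h₁ h₂ => rw [dotProduct_add, h₁, h₂, add_zero]
  | smul a w _ h => rw [dotProduct_smul, h, smul_zero]

end MomentMap

section Action

variable (g : GL (Fin n) ℝ)

theorem act_mulVec (μ : Law n) (X Y : Fin n → ℝ) :
    act g μ (g.1 *ᵥ X) (g.1 *ᵥ Y) = g.1 *ᵥ μ X Y := by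
  simp [act]

theorem act_inv_act (μ : Law n) : act g⁻¹ (act g μ) = μ := by
  funext X Y
  simp [act]

theorem IsBilin.act (hb : IsBilin μ) : IsBilin (act g μ) := by
  refine ⟨fun X => ⟨fun Y Z => ?_, fun a Y => ?_⟩, fun Y => ⟨fun X Z => ?_, fun a X => ?_⟩⟩
  · simp only [_root_.act, mulVec_add, (hb.1 _).map_add]
  · simp only [_root_.act, mulVec_smul, (hb.1 _).map_smul]
  · simp only [_root_.act, mulVec_add, (hb.2 _).map_add]
  · simp only [_root_.act, mulVec_smul, (hb.2 _).map_smul]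

theorem IsSkew.act (hs : IsSkew μ) : IsSkew (act g μ) := fun X Y => by
  rw [_root_.act, hs, mulVec_neg, _root_.act]

theorem IsCentral.act {v : Fin n → ℝ} (hv : IsCentral μ v) : IsCentral (act g μ) (g.1 *ᵥ v) :=
  fun Y => by simp [_root_.act, hv _]

theorem IsDerivation.act (h : IsDerivation μ ψ) : IsDerivation (act g μ) (g.1 * ψ * g⁻¹.1) := by
  intro X Y
  have hcancel : ∀ Z : Fin n → ℝ, g⁻¹.1 *ᵥ g.1 *ᵥ Z = Z := fun Z => by
    rw [mulVec_mulVec, g.inv_mul, one_mulVec]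
  simp only [_root_.act, ← mulVec_mulVec, hcancel, h _ _, mulVec_add]

theorem mulVec_mem_lcs_act {k : ℕ} {v : Fin n → ℝ} (hv : v ∈ lcs μ k) :
    g.1 *ᵥ v ∈ lcs (act g μ) k := by
  induction k generalizing v with
  | zero => trivial
  | succ k ih =>
    induction hv using Submodule.span_induction with
    | mem w hw =>
      obtain ⟨X, Y, hY, rfl⟩ := hw
      exact Submodule.subset_span ⟨g.1 *ᵥ X, g.1 *ᵥ Y, ih hY, (act_mulVec g μ X Y).symm⟩
    | zero => simp
    | add w₁ w₂ _ _ h₁ h₂ => simpa only [mulVec_add] using add_mem h₁ h₂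
    | smul a w _ h => simpa only [mulVec_smul] using Submodule.smul_mem _ a h

theorem IsPreEinstein.of_act (h : IsPreEinstein (act g μ) φ) :
    IsPreEinstein μ (g⁻¹.1 * φ * g.1) := by
  refine ⟨by simpa only [act_inv_act, inv_inv] using h.1.act g⁻¹, fun D hD => ?_⟩
  calc (g⁻¹.1 * φ * g.1 * D).trace
      = (φ * (g.1 * D * g⁻¹.1)).trace := by
        rw [mul_assoc, mul_assoc, trace_mul_comm, mul_assoc, mul_assoc]
    _ = (g.1 * D * g⁻¹.1).trace := h.2 _ (hD.act g)
    _ = D.trace := by rw [trace_mul_comm, ← mul_assoc, g.inv_mul, one_mul]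

end Action

theorem isPreEinstein_of_momentMap_eq (hb : IsBilin μ) (hs : IsSkew μ) {c : ℝ} (hc : c ≠ 0)
    (hφ : IsDerivation μ φ) (hm : momentMap μ = c • (1 : Matrix (Fin n) (Fin n) ℝ) + φ) :
    IsPreEinstein μ ((-c)⁻¹ • φ) := by
  refine ⟨hφ.smul hb _, fun D hD => ?_⟩
  have h := trace_momentMap_mul hb hs hD
  rw [hm, add_mul, trace_add, smul_mul_assoc, one_mul, trace_smul, smul_eq_mul] at h
  rw [smul_mul_assoc, trace_smul, smul_eq_mul, inv_mul_eq_iff_eq_mul₀ (neg_ne_zero.2 hc)]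
  linarith

theorem IsEinsteinNilradical.exists_isPreEinstein (hμ : IsEinsteinNilradical μ) (hb : IsBilin μ)
    (hs : IsSkew μ) : ∃ ψ, IsPreEinstein μ ψ ∧ ∀ (v) (s : ℝ), v ≠ 0 → IsCentral μ v →
      v ∈ lcs μ 1 → ψ *ᵥ v = s • v → 1 < s := by
  obtain ⟨g, c, φ, hc, -, hφ, hm⟩ := hμ
  refine ⟨_, (isPreEinstein_of_momentMap_eq (hb.act g) (hs.act g) hc.ne hφ hm).of_act g,
    fun v s hv0 hv hv' hvs => ?_⟩
  have hgv0 : g.1 *ᵥ v ≠ 0 := fun h => hv0 <| by simpa using congrArg (g⁻¹.1 *ᵥ ·) h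
  have heigen : φ *ᵥ g.1 *ᵥ v = (-c * s) • g.1 *ᵥ v := by
    calc φ *ᵥ g.1 *ᵥ v = -c • g.1 *ᵥ (g⁻¹.1 * ((-c)⁻¹ • φ) * g.1) *ᵥ v := by
          simp only [mulVec_mulVec, ← mul_assoc, g.mul_inv, one_mul, smul_mul_assoc, smul_mulVec,
            smul_inv_smul₀ (neg_ne_zero.2 hc.ne)]
      _ = (-c * s) • g.1 *ᵥ v := by rw [hvs, mulVec_smul, smul_smul]
  have hpos := dotProduct_momentMap_mulVec_pos (hb.act g) (hs.act g) (hv.act g)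
    (mulVec_mem_lcs_act g hv') hgv0
  rw [hm, add_mulVec, smul_mulVec, one_mulVec, heigen, ← add_smul, dotProduct_smul,
    smul_eq_mul] at hpos
  have hcs : 0 < c + -c * s :=
    pos_of_mul_pos_left hpos (dotProduct_self_star_nonneg (g.1 *ᵥ v))
  nlinarith

section Law31

variable {lam : ℝ}

theorem isBilin_mkLaw (c : Fin n → Fin n → Fin n → ℝ) : IsBilin (mkLaw c) := by
  refine ⟨fun X => ⟨fun Y Z => ?_, fun a Y => ?_⟩, fun Y => ⟨fun X Z => ?_, fun a X => ?_⟩⟩ <;>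
    funext k <;> simp only [mkLaw, Pi.add_apply, Pi.smul_apply, smul_eq_mul, mul_add, add_mul,
      Finset.sum_add_distrib, Finset.mul_sum]
  all_goals exact Finset.sum_congr rfl fun i _ => Finset.sum_congr rfl fun j _ => by ring

theorem isSkew_mkLaw (c : Fin n → Fin n → Fin n → ℝ) : IsSkew (mkLaw c) := by
  intro X Y
  funext k
  simp only [mkLaw, Pi.neg_apply, ← Finset.sum_neg_distrib]
  rw [Finset.sum_comm]
  exact Finset.sum_congr rfl fun i _ => Finset.sum_congr rfl fun j _ => by ring

theorem isBilin_law31 (lam : ℝ) : IsBilin (law31 lam) :=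
  isBilin_mkLaw (c31 lam)

theorem isSkew_law31 (lam : ℝ) : IsSkew (law31 lam) :=
  isSkew_mkLaw (c31 lam)

theorem law31_apply (lam : ℝ) (X Y : Fin 7 → ℝ) : law31 lam X Y =
    ![0, 0, 0, X 0 * Y 1 - X 1 * Y 0, X 0 * Y 2 - X 2 * Y 0, X 1 * Y 2 - X 2 * Y 1,
      X 0 * Y 5 - X 5 * Y 0 + lam * (X 1 * Y 4 - X 4 * Y 1)
        + (lam - 1) * (X 2 * Y 3 - X 3 * Y 2)] := by
  funext k
  fin_cases k <;> simp [law31, mkLaw, c31, Fin.sum_univ_seven] <;> ring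

theorem law31_bVec_zero_one : law31 lam (bVec 0) (bVec 1) = bVec 3 := by
  rw [law31_apply]; funext k; fin_cases k <;> simp [bVec, Fin.ext_iff]

theorem law31_bVec_zero_two : law31 lam (bVec 0) (bVec 2) = bVec 4 := by
  rw [law31_apply]; funext k; fin_cases k <;> simp [bVec, Fin.ext_iff]

theorem law31_bVec_one_two : law31 lam (bVec 1) (bVec 2) = bVec 5 := by
  rw [law31_apply]; funext k; fin_cases k <;> simp [bVec, Fin.ext_iff]

theorem law31_bVec_zero_five : law31 lam (bVec 0) (bVec 5) = bVec 6 := by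
  rw [law31_apply]; funext k; fin_cases k <;> simp [bVec, Fin.ext_iff]

theorem isCentral_law31_iff {X : Fin 7 → ℝ} : IsCentral (law31 lam) X ↔
    X 0 = 0 ∧ X 1 = 0 ∧ X 2 = 0 ∧ X 5 = 0 ∧ (lam - 1) * X 3 = 0 ∧ lam * X 4 = 0 := by
  constructor
  · intro h
    have h₀ : X 0 = 0 := by simpa [law31_apply, bVec] using congrFun (h (bVec 1)) 3
    have h₁ : X 1 = 0 := by simpa [law31_apply, bVec] using congrFun (h (bVec 0)) 3
    have h₂ : X 2 = 0 := by simpa [law31_apply, bVec] using congrFun (h (bVec 0)) 4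
    have h₅ : X 5 = 0 := by simpa [law31_apply, bVec] using congrFun (h (bVec 0)) 6
    have h₃ : (lam - 1) * X 3 = 0 := by simpa [law31_apply, bVec] using congrFun (h (bVec 2)) 6
    have h₄ : lam * X 4 = 0 := by simpa [law31_apply, bVec] using congrFun (h (bVec 1)) 6
    exact ⟨h₀, h₁, h₂, h₅, h₃, h₄⟩
  · rintro ⟨h₀, h₁, h₂, h₅, h₃, h₄⟩ Y
    rw [law31_apply, h₀, h₁, h₂, h₅]
    funext k
    fin_cases k <;> simp
    linear_combination -Y 1 * h₄ - Y 2 * h₃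

theorem isCentral_law31_zero_iff {X : Fin 7 → ℝ} :
    IsCentral (law31 0) X ↔ X ∈ Submodule.span ℝ {bVec 4, bVec 6} := by
  rw [isCentral_law31_iff, Submodule.mem_span_pair]
  constructor
  · rintro ⟨h₀, h₁, h₂, h₅, h₃, -⟩
    refine ⟨X 4, X 6, funext fun k => ?_⟩
    fin_cases k <;> simp_all [bVec, Fin.ext_iff]
  · rintro ⟨a, b, rfl⟩
    simp [bVec, Fin.ext_iff]

theorem isCentral_law31_one_iff {X : Fin 7 → ℝ} :
    IsCentral (law31 1) X ↔ X ∈ Submodule.span ℝ {bVec 3, bVec 6} := by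
  rw [isCentral_law31_iff, Submodule.mem_span_pair]
  constructor
  · rintro ⟨h₀, h₁, h₂, h₅, -, h₄⟩
    refine ⟨X 3, X 6, funext fun k => ?_⟩
    fin_cases k <;> simp_all [bVec, Fin.ext_iff]
  · rintro ⟨a, b, rfl⟩
    simp [bVec, Fin.ext_iff]

theorem bVec_mem_lcs_law31_one {k : Fin 7} (hk : k = 3 ∨ k = 4 ∨ k = 6) :
    bVec k ∈ lcs (law31 lam) 1 := by
  refine Submodule.subset_span ?_
  rcases hk with rfl | rfl | rfl
  · exact ⟨_, _, trivial, law31_bVec_zero_one.symm⟩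
  · exact ⟨_, _, trivial, law31_bVec_zero_two.symm⟩
  · exact ⟨_, _, trivial, law31_bVec_zero_five.symm⟩

theorem law31_law31_mem_span (X Y Z : Fin 7 → ℝ) :
    law31 lam X (law31 lam Y Z) ∈ Submodule.span ℝ {bVec 6} := by
  refine Submodule.mem_span_singleton.2 ⟨law31 lam X (law31 lam Y Z) 6, ?_⟩
  simp only [law31_apply]
  funext k
  fin_cases k <;> simp [bVec, Fin.ext_iff]

theorem isDerivation_law31_diagonal (lam x y z : ℝ) : IsDerivation (law31 lam)
    (diagonal ![x, y, z, x + y, x + z, y + z, x + y + z]) := by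
  intro X Y
  simp only [law31_apply]
  funext k
  rw [mulVec_diagonal]
  fin_cases k <;> simp [mulVec_diagonal] <;> ring

theorem IsDerivation.law31_diag {ψ : Matrix (Fin 7) (Fin 7) ℝ}
    (h : IsDerivation (law31 lam) ψ) : ψ 3 3 = ψ 0 0 + ψ 1 1 ∧ ψ 4 4 = ψ 0 0 + ψ 2 2 ∧
      ψ 5 5 = ψ 1 1 + ψ 2 2 ∧ ψ 6 6 = ψ 0 0 + ψ 5 5 := by
  refine ⟨?_, ?_, ?_, ?_⟩
  · simpa [law31_apply, bVec] using congrFun (h.col_eq law31_bVec_zero_one) 3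
  · simpa [law31_apply, bVec] using congrFun (h.col_eq law31_bVec_zero_two) 4
  · simpa [law31_apply, bVec] using congrFun (h.col_eq law31_bVec_one_two) 5
  · simpa [law31_apply, bVec] using congrFun (h.col_eq law31_bVec_zero_five) 6

theorem IsDerivation.law31_mulVec_bVec_six {ψ : Matrix (Fin 7) (Fin 7) ℝ}
    (h : IsDerivation (law31 lam) ψ) : ψ *ᵥ bVec 6 = ψ 6 6 • bVec 6 := by
  have hmem : ψ *ᵥ law31 lam (bVec 0) (law31 lam (bVec 1) (bVec 2)) ∈
      Submodule.span ℝ {bVec 6} := by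
    rw [h, h, ((isBilin_law31 lam).1 _).map_add]
    exact add_mem (law31_law31_mem_span _ _ _)
      (add_mem (law31_law31_mem_span _ _ _) (law31_law31_mem_span _ _ _))
  rw [law31_bVec_one_two, law31_bVec_zero_five] at hmem
  obtain ⟨a, ha⟩ := Submodule.mem_span_singleton.1 hmem
  have ha6 : a = ψ 6 6 := by simpa [mulVec_bVec, bVec] using congrFun ha 6
  rw [← ha, ha6]

theorem IsPreEinstein.law31_diag {ψ : Matrix (Fin 7) (Fin 7) ℝ}
    (h : IsPreEinstein (law31 lam) ψ) : ψ 3 3 = 1 ∧ ψ 4 4 = 1 ∧ ψ 6 6 = 3 / 2 := by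
  obtain ⟨h₃, h₄, h₅, h₆⟩ := h.1.law31_diag
  have hx : ψ 0 0 + ψ 3 3 + ψ 4 4 + ψ 6 6 = 4 := by
    have htr := h.2 _ (isDerivation_law31_diagonal lam 1 0 0)
    simp [trace, Fin.sum_univ_seven, mul_diagonal] at htr
    linarith
  have hy : ψ 1 1 + ψ 3 3 + ψ 5 5 + ψ 6 6 = 4 := by
    have htr := h.2 _ (isDerivation_law31_diagonal lam 0 1 0)
    simp [trace, Fin.sum_univ_seven, mul_diagonal] at htr
    linarith
  have hz : ψ 2 2 + ψ 4 4 + ψ 5 5 + ψ 6 6 = 4 := by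
    have htr := h.2 _ (isDerivation_law31_diagonal lam 0 0 1)
    simp [trace, Fin.sum_univ_seven, mul_diagonal] at htr
    linarith
  refine ⟨?_, ?_, ?_⟩ <;> linarith

theorem not_isEinsteinNilradical_law31 {k : Fin 7} (hk : k = 3 ∨ k = 4)
    (hcentre : ∀ X, IsCentral (law31 lam) X ↔ X ∈ Submodule.span ℝ {bVec k, bVec 6}) :
    ¬ IsEinsteinNilradical (law31 lam) := by
  intro hE
  obtain ⟨ψ, hψ, hgt⟩ := hE.exists_isPreEinstein (isBilin_law31 lam) (isSkew_law31 lam)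
  obtain ⟨h₃, h₄, h₆⟩ := hψ.law31_diag
  have hk6 : k ≠ 6 := by rcases hk with rfl | rfl <;> decide
  have hkk : ψ k k = 1 := by rcases hk with rfl | rfl <;> assumption
  have hcentral : bVec k ∈ Submodule.span ℝ {bVec k, bVec 6} := Submodule.subset_span (by simp)
  obtain ⟨a, b, hab⟩ := Submodule.mem_span_pair.1 <|
    (hcentre _).1 (hψ.1.isCentral_mulVec ((hcentre _).2 hcentral))
  have ha : a = 1 := by simpa [mulVec_bVec, bVec, hkk, hk6] using congrFun hab k
  have heigen : ψ *ᵥ (bVec k + (-2 * b) • bVec 6) = (1 : ℝ) • (bVec k + (-2 * b) • bVec 6) := by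
    rw [mulVec_add, mulVec_smul, hψ.1.law31_mulVec_bVec_six, ← hab, ha, h₆]
    module
  have hne : bVec k + (-2 * b) • bVec 6 ≠ 0 := fun h => by
    simpa [bVec, hk6] using congrFun h k
  have hmem : bVec k + (-2 * b) • bVec 6 ∈ lcs (law31 lam) 1 :=
    add_mem (bVec_mem_lcs_law31_one (by tauto))
      (Submodule.smul_mem _ _ (bVec_mem_lcs_law31_one (by tauto)))
  exact lt_irrefl 1 <| hgt _ 1 hne ((hcentre _).2 <| Submodule.mem_span_pair.2 ⟨1, -2 * b, by simp⟩)
    hmem heigen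

end Law31

/-- for `λ = 0` and `λ = 1`, `g_{3.1(i_λ)}` is not an Einstein
nilradical. -/
theorem stmt_15 :
    ¬ IsEinsteinNilradical (law31 0) ∧ ¬ IsEinsteinNilradical (law31 1) := by
  exact ⟨not_isEinsteinNilradical_law31 (.inr rfl) fun _ => isCentral_law31_zero_iff,
    not_isEinsteinNilradical_law31 (.inl rfl) fun _ => isCentral_law31_one_iff⟩
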